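/- Let P ⊂ ℝⁿ be a symmetric polytope whose facets are simplices. Then (1/|P|) ∫_P ‖x‖₂² dx ≤ (2/((n+1)(n+2))) · max ‖ε₁y₁ + … + εₙyₙ‖₂², where the maximum is over all facets conv{y₁,…,yₙ} of P and all sign choices ε₁,…,εₙ ∈ {−1,+1}. -/

import Mathlib

open MeasureTheory

/-- `F` is a facet of the polytope `P ⊂ ℝⁿ`: a proper nonempty exposed face whose
affine span has dimension `n − 1`. -/
def IsFacet {n : ℕ} (P F : Set (Fin n → ℝ)) : Prop :=
  IsExposed ℝ P F ∧ F ≠ P ∧ F.Nonempty ∧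
    Module.finrank ℝ (affineSpan ℝ F).direction = n - 1


lemma aux_gamma (a : ℕ) : IntegrableOn (fun t : ℝ => t ^ a * Real.exp (-t)) (Set.Ioi 0) ∧
    ∫ t in Set.Ioi (0:ℝ), t ^ a * Real.exp (-t) = (a.factorial : ℝ) := by
  have h0 : (0:ℝ) < (a:ℝ) + 1 := by positivity
  have h1 := Real.GammaIntegral_convergent h0
  have h2 := Real.Gamma_eq_integral h0
  rw [Real.Gamma_nat_eq_factorial] at h2
  have h3 : ∀ t : ℝ, Real.exp (-t) * t ^ ((a:ℝ) + 1 - 1) = t ^ a * Real.exp (-t) := by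
    intro t; rw [add_sub_cancel_right, Real.rpow_natCast, mul_comm]
  simp only [h3] at h1 h2
  exact ⟨h1, h2.symm⟩

/-- the solid standard simplex -/
def solidSimplex (n : ℕ) : Set (Fin n → ℝ) := {u | (∀ i, 0 ≤ u i) ∧ ∑ i, u i ≤ 1}

lemma measurableSet_orth (n : ℕ) : MeasurableSet {u : Fin n → ℝ | ∀ i, 0 ≤ u i} := by
  have : {u : Fin n → ℝ | ∀ i, 0 ≤ u i} = ⋂ i, {u | 0 ≤ u i} := by ext; simp
  rw [this]
  exact MeasurableSet.iInter fun i => measurableSet_le measurable_const (measurable_pi_apply i)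

lemma measurableSet_scaled (n : ℕ) (s : ℝ) :
    MeasurableSet {u : Fin n → ℝ | (∀ i, 0 ≤ u i) ∧ ∑ i, u i ≤ s} := by
  have h : MeasurableSet {u : Fin n → ℝ | ∑ i, u i ≤ s} :=
    measurableSet_le (by fun_prop) measurable_const
  exact (measurableSet_orth n).inter h

lemma isClosed_solidSimplex (n : ℕ) : IsClosed (solidSimplex n) := by
  have : solidSimplex n = (⋂ i, {u | 0 ≤ u i}) ∩ {u | ∑ i, u i ≤ 1} := by
    ext; simp [solidSimplex]
  rw [this]
  refine IsClosed.inter (isClosed_iInter fun i => isClosed_le (by fun_prop) (by fun_prop))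
    (isClosed_le (by fun_prop) (by fun_prop))

lemma isCompact_solidSimplex (n : ℕ) : IsCompact (solidSimplex n) := by
  refine (isCompact_Icc (a := (0 : Fin n → ℝ)) (b := 1)).of_isClosed_subset
    (isClosed_solidSimplex n) ?_
  rintro u ⟨h1, h2⟩
  refine ⟨h1, fun i => ?_⟩
  exact (Finset.single_le_sum (fun j _ => h1 j) (Finset.mem_univ i)).trans h2

lemma lhs_prod {n : ℕ} (a : Fin n → ℕ) :
    ∫⁻ u : Fin n → ℝ, Set.indicator {u | ∀ i, 0 ≤ u i}
      (fun u => ENNReal.ofReal (∏ i, u i ^ a i)) u * ENNReal.ofReal (Real.exp (-∑ i, u i))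
      = ENNReal.ofReal (∏ i, ((a i).factorial : ℝ)) := by
  have hf : ∀ i, Integrable ((Set.Ici (0:ℝ)).indicator
      (fun t : ℝ => t ^ a i * Real.exp (-t))) := fun i => by
    rw [integrable_indicator_iff measurableSet_Ici, integrableOn_Ici_iff_integrableOn_Ioi]
    exact (aux_gamma (a i)).1
  have h1 := integral_fintype_prod_volume_eq_prod (𝕜 := ℝ)
    (fun i => (Set.Ici (0:ℝ)).indicator (fun t : ℝ => t ^ a i * Real.exp (-t)))
  have h2 : Integrable (fun x : Fin n → ℝ => ∏ i, (Set.Ici (0:ℝ)).indicator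
      (fun t : ℝ => t ^ a i * Real.exp (-t)) (x i)) := Integrable.fintype_prod hf
  simp only [integral_indicator measurableSet_Ici, integral_Ici_eq_integral_Ioi,
    (aux_gamma _).2] at h1
  rw [← h1, ofReal_integral_eq_lintegral_ofReal h2]
  · refine lintegral_congr fun u => ?_
    by_cases hu : ∀ i, 0 ≤ u i
    · have : u ∈ {u : Fin n → ℝ | ∀ i, 0 ≤ u i} := hu
      rw [Set.indicator_of_mem this, ← ENNReal.ofReal_mul (Finset.prod_nonneg fun i _ => pow_nonneg (hu i) _)]
      congr 1
      rw [← Finset.sum_neg_distrib, Real.exp_sum, ← Finset.prod_mul_distrib]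
      refine Finset.prod_congr rfl fun i _ => ?_
      rw [Set.indicator_of_mem (by exact hu i)]
    · have : u ∉ {u : Fin n → ℝ | ∀ i, 0 ≤ u i} := hu
      rw [Set.indicator_of_notMem this]
      push Not at hu
      obtain ⟨i, hi⟩ := hu
      rw [Finset.prod_eq_zero (Finset.mem_univ i)]
      · simp
      · rw [Set.indicator_of_notMem]; simpa using hi
  · refine Filter.Eventually.of_forall fun u => Finset.prod_nonneg fun i _ => ?_
    exact Set.indicator_nonneg (fun t ht => mul_nonneg (pow_nonneg ht _) (Real.exp_pos _).le) _

lemma scale_int {n : ℕ} (a : Fin n → ℕ) (s : ℝ) (hs : 0 < s) :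
    ∫⁻ u : Fin n → ℝ, Set.indicator {u | (∀ i, 0 ≤ u i) ∧ ∑ i, u i ≤ s}
      (fun u => ENNReal.ofReal (∏ i, u i ^ a i)) u
    = ENNReal.ofReal (s ^ (n + ∑ i, a i)) *
      ∫⁻ u in solidSimplex n, ENNReal.ofReal (∏ i, u i ^ a i) := by
  set f : (Fin n → ℝ) → ENNReal := Set.indicator {u | (∀ i, 0 ≤ u i) ∧ ∑ i, u i ≤ s}
      (fun u => ENNReal.ofReal (∏ i, u i ^ a i)) with hfdef
  have hm : MeasurableSet {u : Fin n → ℝ | (∀ i, 0 ≤ u i) ∧ ∑ i, u i ≤ s} :=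
    measurableSet_scaled n s
  have hpm : Measurable (fun u : Fin n → ℝ => ENNReal.ofReal (∏ i, u i ^ a i)) := by fun_prop
  have hfm : Measurable f := hpm.indicator hm
  have h1 := Measure.map_addHaar_smul (volume : Measure (Fin n → ℝ)) hs.ne'
  have h2 : ∫⁻ u, f (s • u) = ENNReal.ofReal |(s ^ n)⁻¹| * ∫⁻ u, f u := by
    rw [← lintegral_map hfm (measurable_const_smul s), h1, lintegral_smul_measure]
    simp
  have h3 : ∫⁻ u, f (s • u) = ENNReal.ofReal (s ^ (∑ i, a i)) *
      ∫⁻ u in solidSimplex n, ENNReal.ofReal (∏ i, u i ^ a i) := by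
    rw [← lintegral_indicator (isClosed_solidSimplex n).measurableSet,
      ← lintegral_const_mul _ (Measurable.indicator (by fun_prop) (isClosed_solidSimplex n).measurableSet)]
    refine lintegral_congr fun u => ?_
    have hiff : s • u ∈ {u : Fin n → ℝ | (∀ i, 0 ≤ u i) ∧ ∑ i, u i ≤ s} ↔ u ∈ solidSimplex n := by
      simp only [solidSimplex, Set.mem_ofPred_eq, Pi.smul_apply, smul_eq_mul, ← Finset.mul_sum]
      refine and_congr (forall_congr' fun i => mul_nonneg_iff_of_pos_left hs) ?_
      exact mul_le_iff_le_one_right hs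
    by_cases hu : u ∈ solidSimplex n
    · rw [hfdef, Set.indicator_of_mem (hiff.2 hu), Set.indicator_of_mem hu,
        ← ENNReal.ofReal_mul (by positivity)]
      simp [mul_pow, Finset.prod_mul_distrib, Finset.prod_pow_eq_pow_sum]
    · rw [hfdef, Set.indicator_of_notMem (fun h => hu (hiff.1 h)), Set.indicator_of_notMem hu, mul_zero]
  rw [h3] at h2
  rw [pow_add, ENNReal.ofReal_mul (by positivity), mul_assoc, h2, ← mul_assoc,
    ← ENNReal.ofReal_mul (by positivity), abs_of_pos (by positivity),
    mul_inv_cancel₀ (by positivity)]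
  simp

lemma lintegral_exp_Ici (c : ℝ) :
    ∫⁻ s : ℝ, (Set.Ici c).indicator (fun s => ENNReal.ofReal (Real.exp (-s))) s
      = ENNReal.ofReal (Real.exp (-c)) := by
  rw [lintegral_indicator measurableSet_Ici, ← ofReal_integral_eq_lintegral_ofReal,
    integral_Ici_eq_integral_Ioi, integral_exp_neg_Ioi]
  · change IntegrableOn (fun a => Real.exp (-a)) (Set.Ici c) volume
    rw [integrableOn_Ici_iff_integrableOn_Ioi]
    exact integrableOn_exp_neg_Ioi c
  · exact Filter.Eventually.of_forall fun s => (Real.exp_pos _).le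

lemma moment_lintegral {n : ℕ} (a : Fin n → ℕ) :
    ENNReal.ofReal ((n + ∑ i, a i).factorial : ℝ) *
      ∫⁻ u in solidSimplex n, ENNReal.ofReal (∏ i, u i ^ a i)
      = ENNReal.ofReal (∏ i, ((a i).factorial : ℝ)) := by
  rw [← lhs_prod a]
  conv_rhs => enter [2, u, 2]; rw [← lintegral_exp_Ici]
  set J := ∫⁻ u in solidSimplex n, ENNReal.ofReal (∏ i, u i ^ a i)
  set g : (Fin n → ℝ) → ENNReal := Set.indicator {u | ∀ i, 0 ≤ u i}
      (fun u => ENNReal.ofReal (∏ i, u i ^ a i)) with hg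
  have hgm : Measurable g := Measurable.indicator (by fun_prop) (measurableSet_orth n)
  have hK : Measurable (fun p : (Fin n → ℝ) × ℝ =>
      g p.1 * (Set.Ici (∑ i, p.1 i)).indicator (fun s => ENNReal.ofReal (Real.exp (-s))) p.2) := by
    refine (hgm.comp measurable_fst).mul ?_
    have : (fun p : (Fin n → ℝ) × ℝ => (Set.Ici (∑ i, p.1 i)).indicator
        (fun s => ENNReal.ofReal (Real.exp (-s))) p.2) =
        Set.indicator {p : (Fin n → ℝ) × ℝ | ∑ i, p.1 i ≤ p.2}
          (fun p => ENNReal.ofReal (Real.exp (-p.2))) := by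
      ext p; simp [Set.indicator]
    rw [this]
    exact Measurable.indicator (by fun_prop) (measurableSet_le (by fun_prop) (by fun_prop))
  have e1 : ∀ u : Fin n → ℝ, g u * ∫⁻ s : ℝ, (Set.Ici (∑ i, u i)).indicator
      (fun s => ENNReal.ofReal (Real.exp (-s))) s = ∫⁻ s : ℝ, g u * (Set.Ici (∑ i, u i)).indicator
      (fun s => ENNReal.ofReal (Real.exp (-s))) s := fun u => by
    rw [lintegral_const_mul _ (Measurable.indicator (by fun_prop) measurableSet_Ici)]
  simp_rw [e1]
  rw [lintegral_lintegral_swap hK.aemeasurable]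
  have hae : ∀ᵐ s : ℝ, (∫⁻ u : Fin n → ℝ, g u * (Set.Ici (∑ i, u i)).indicator
      (fun s => ENNReal.ofReal (Real.exp (-s))) s) =
      (Set.Ioi (0:ℝ)).indicator (fun s => ENNReal.ofReal (s ^ (n + ∑ i, a i) * Real.exp (-s))) s * J := by
    have h0 : ∀ᵐ s : ℝ, s ≠ 0 := Measure.ae_ne volume 0
    filter_upwards [h0] with s hs
    have e2 : ∀ u : Fin n → ℝ, g u * (Set.Ici (∑ i, u i)).indicator
      (fun s => ENNReal.ofReal (Real.exp (-s))) s = ENNReal.ofReal (Real.exp (-s)) *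
        Set.indicator {u | (∀ i, 0 ≤ u i) ∧ ∑ i, u i ≤ s}
      (fun u => ENNReal.ofReal (∏ i, u i ^ a i)) u := by
      intro u
      simp only [hg, Set.indicator, Set.mem_ofPred_eq, Set.mem_Ici]
      by_cases h1 : ∀ i, 0 ≤ u i <;> by_cases h2 : ∑ i, u i ≤ s <;> simp [h1, h2, mul_comm]
    simp_rw [e2]
    have hm : MeasurableSet {u : Fin n → ℝ | (∀ i, 0 ≤ u i) ∧ ∑ i, u i ≤ s} :=
      measurableSet_scaled n s
    rw [lintegral_const_mul _ (Measurable.indicator (by fun_prop) hm)]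
    rcases lt_or_gt_of_ne hs with h | h
    · have : {u : Fin n → ℝ | (∀ i, 0 ≤ u i) ∧ ∑ i, u i ≤ s} = ∅ := by
        ext u
        simp only [Set.mem_ofPred_eq, Set.mem_empty_iff_false, iff_false, not_and, not_le]
        intro hu
        exact h.trans_le (Finset.sum_nonneg fun i _ => hu i)
      rw [this, Set.indicator_of_notMem (by simpa using h.le)]
      simp
    · rw [scale_int a s h, Set.indicator_of_mem (by exact h), ENNReal.ofReal_mul (by positivity)]
      ring
  rw [lintegral_congr_ae hae, lintegral_mul_const _ (Measurable.indicator (by fun_prop) measurableSet_Ioi),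
    lintegral_indicator measurableSet_Ioi, ← ofReal_integral_eq_lintegral_ofReal (aux_gamma _).1,
    (aux_gamma _).2]
  filter_upwards [ae_restrict_mem measurableSet_Ioi] with s hs
  exact mul_nonneg (pow_nonneg (le_of_lt hs) _) (Real.exp_pos _).le

lemma moment_integral {n : ℕ} (a : Fin n → ℕ) :
    ∫ u in solidSimplex n, ∏ i, u i ^ a i
      = (∏ i, ((a i).factorial : ℝ)) / ((n + ∑ i, a i).factorial : ℝ) := by
  have h := congrArg ENNReal.toReal (moment_lintegral a)
  rw [← ofReal_integral_eq_lintegral_ofReal, ENNReal.toReal_mul, ENNReal.toReal_ofReal,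
    ENNReal.toReal_ofReal, ENNReal.toReal_ofReal] at h
  · rw [eq_div_iff (by positivity), mul_comm, h]
  · positivity
  · refine setIntegral_nonneg (isClosed_solidSimplex n).measurableSet fun u hu => Finset.prod_nonneg fun i _ => pow_nonneg (hu.1 i) _
  · positivity
  · refine ContinuousOn.integrableOn_compact (isCompact_solidSimplex n) (by fun_prop)
  · filter_upwards [ae_restrict_mem (isClosed_solidSimplex n).measurableSet] with u hu
    exact Finset.prod_nonneg fun i _ => pow_nonneg (hu.1 i) _

lemma simplex_vol (n : ℕ) : ∫ _u in solidSimplex n, (1:ℝ) = 1 / (n.factorial : ℝ) := by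
  have := moment_integral (n := n) 0
  simpa using this

lemma simplex_mom (n : ℕ) (i j : Fin n) : ∫ u in solidSimplex n, u i * u j =
    (if i = j then 2 else 1) / ((n + 2).factorial : ℝ) := by
  have := moment_integral (n := n) (Pi.single i 1 + Pi.single j 1)
  have e : ∀ u : Fin n → ℝ, ∏ k, u k ^ ((Pi.single i 1 + Pi.single j 1 : Fin n → ℕ) k) = u i * u j := by
    intro u
    simp only [Pi.add_apply, pow_add, Finset.prod_mul_distrib]
    congr 1 <;> simp [Pi.single_apply]
  simp_rw [e] at this
  rw [this]
  have e2 : ∑ k, (Pi.single i 1 + Pi.single j 1 : Fin n → ℕ) k = 2 := by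
    simp [Finset.sum_add_distrib]
  rw [e2]
  congr 1
  split_ifs with h
  · subst h
    rw [Finset.prod_eq_single i]
    · simp
    · intro b _ hb; simp [hb]
    · simp
  · refine Finset.prod_eq_one fun k _ => ?_
    by_cases h1 : k = i
    · subst h1; simp [h]
    · by_cases h2 : k = j
      · subst h2; simp [h1]
      · simp [h1, h2]

lemma quad_integral {n : ℕ} (Y : Fin n → Fin n → ℝ) :
    ∫ u in solidSimplex n, ∑ j, (∑ i, u i * Y i j) ^ 2 =
      (∑ j, (∑ i, Y i j) ^ 2 + ∑ i, ∑ j, Y i j ^ 2) / ((n + 2).factorial : ℝ) := by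
  have hint : ∀ f : (Fin n → ℝ) → ℝ, Continuous f → IntegrableOn f (solidSimplex n) := fun f hf =>
    hf.continuousOn.integrableOn_compact (isCompact_solidSimplex n)
  have e : ∀ u : Fin n → ℝ, ∑ j, (∑ i, u i * Y i j) ^ 2 =
      ∑ j, ∑ i, ∑ k, (Y i j * Y k j) * (u i * u k) := by
    intro u
    refine Finset.sum_congr rfl fun j _ => ?_
    rw [sq, Finset.sum_mul_sum]
    refine Finset.sum_congr rfl fun i _ => Finset.sum_congr rfl fun k _ => by ring
  simp_rw [e]
  rw [integral_finsetSum _ (fun j _ => hint _ (by fun_prop))]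
  have e2 : ∀ j, ∫ u in solidSimplex n, ∑ i, ∑ k, (Y i j * Y k j) * (u i * u k) =
      ((∑ i, Y i j) ^ 2 + ∑ i, Y i j ^ 2) / ((n + 2).factorial : ℝ) := by
    intro j
    rw [integral_finsetSum _ (fun j _ => hint _ (by fun_prop))]
    have e3 : ∀ i, ∫ u in solidSimplex n, ∑ k, (Y i j * Y k j) * (u i * u k) =
        (∑ k, Y i j * Y k j + Y i j ^ 2) / ((n + 2).factorial : ℝ) := by
      intro i
      rw [integral_finsetSum _ (fun j _ => hint _ (by fun_prop))]
      simp_rw [integral_const_mul, simplex_mom]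
      have : ∀ k, Y i j * Y k j * ((if i = k then (2:ℝ) else 1) / ((n + 2).factorial : ℝ)) =
          (Y i j * Y k j + if i = k then Y i j * Y k j else 0) / ((n + 2).factorial : ℝ) := by
        intro k; split_ifs <;> ring
      simp_rw [this]
      rw [← Finset.sum_div, Finset.sum_add_distrib]
      simp [sq]
    simp_rw [e3]
    rw [← Finset.sum_div, Finset.sum_add_distrib, sq (∑ i, Y i j), Finset.sum_mul_sum]
  simp_rw [e2]
  rw [← Finset.sum_div, Finset.sum_add_distrib, Finset.sum_comm (f := fun j i => Y i j ^ 2)]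

/-- the simplex spanned by the origin and the points `Y i` -/
def coneSimplex {n : ℕ} (Y : Fin n → Fin n → ℝ) : Set (Fin n → ℝ) :=
  Fintype.linearCombination ℝ Y '' solidSimplex n

lemma isCompact_coneSimplex {n : ℕ} (Y : Fin n → Fin n → ℝ) : IsCompact (coneSimplex Y) :=
  (isCompact_solidSimplex n).image (LinearMap.continuous_of_finiteDimensional _)

lemma cone_integral_le {n : ℕ} (Y : Fin n → Fin n → ℝ) (M : ℝ)
    (hA : ∑ j, (∑ i, Y i j) ^ 2 ≤ M) (hB : ∑ i, ∑ j, Y i j ^ 2 ≤ M) :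
    ∫ x in coneSimplex Y, (∑ j, x j ^ 2 - 2 / ((n + 1) * (n + 2)) * M) ≤ 0 := by
  set L := Fintype.linearCombination ℝ Y with hL
  by_cases hdet : LinearMap.det L = 0
  · rw [setIntegral_measure_zero]
    rw [coneSimplex, Measure.addHaar_image_linearMap, ← hL, hdet]
    simp
  · have hinj : Function.Injective L :=
      (LinearMap.equivOfDetNeZero L hdet).injective
    rw [coneSimplex, ← hL]
    have h := integral_image_eq_integral_abs_det_fderiv_smul (volume : Measure (Fin n → ℝ))
      (f := L) (f' := fun _ => LinearMap.toContinuousLinearMap L)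
      (isClosed_solidSimplex n).measurableSet
      (fun x _ => (LinearMap.toContinuousLinearMap L).hasFDerivAt.hasFDerivWithinAt)
      hinj.injOn (fun x => (∑ j, x j ^ 2 - 2 / ((n + 1) * (n + 2)) * M))
    rw [h, integral_smul]
    refine mul_nonpos_of_nonneg_of_nonpos (abs_nonneg _) ?_
    have e : ∀ u j, L u j = ∑ i, u i * Y i j := by
      intro u j; simp [hL, Fintype.linearCombination_apply]
    simp_rw [e]
    have hint : ∀ f : (Fin n → ℝ) → ℝ, Continuous f → IntegrableOn f (solidSimplex n) :=
      fun f hf => hf.continuousOn.integrableOn_compact (isCompact_solidSimplex n)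
    rw [integral_sub (hint _ (by fun_prop)) (hint _ (by fun_prop)), quad_integral]
    have e1 : ∫ _u in solidSimplex n, 2 / (((n:ℝ) + 1) * (n + 2)) * M =
        2 / (((n:ℝ) + 1) * (n + 2)) * M * (1 / (n.factorial : ℝ)) := by
      rw [← simplex_vol, ← integral_const_mul, mul_one]
    rw [e1]
    have e2 : ((n + 2).factorial : ℝ) = (n + 1) * (n + 2) * n.factorial := by
      rw [Nat.factorial_succ, Nat.factorial_succ]; push_cast; ring
    have e3 : 2 / (((n:ℝ) + 1) * (n + 2)) * M * (1 / (n.factorial : ℝ)) =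
        (M + M) / ((n + 2).factorial : ℝ) := by
      rw [e2]
      have : (n.factorial : ℝ) ≠ 0 := by positivity
      field_simp
      ring
    rw [e3, sub_nonpos]
    gcongr

lemma bool_sign_sum {n : ℕ} (i k : Fin n) :
    ∑ ε : Fin n → Bool, (if ε i then (1:ℝ) else -1) * (if ε k then (1:ℝ) else -1) =
      if i = k then (2:ℝ) ^ n else 0 := by
  split_ifs with h
  · subst h
    have : ∀ ε : Fin n → Bool, (if ε i then (1:ℝ) else -1) * (if ε i then (1:ℝ) else -1) = 1 := by
      intro ε; split_ifs <;> norm_num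
    simp [this]
  · refine Finset.sum_involution (fun ε _ => Function.update ε i (!ε i)) ?_ ?_ ?_ ?_
    · intro ε _
      simp only [Function.update_self, Function.update_of_ne (Ne.symm h)]
      cases ε i <;> cases ε k <;> norm_num
    · intro ε _ _ hc
      have := congrFun hc i
      simp at this
    · intro ε _; simp
    · intro ε _; simp

lemma sign_avg {n : ℕ} (Y : Fin n → Fin n → ℝ) (M : ℝ)
    (h : ∀ ε : Fin n → Bool, ∑ j, (∑ i, (if ε i then (1 : ℝ) else -1) * Y i j) ^ 2 ≤ M) :
    ∑ i, ∑ j, Y i j ^ 2 ≤ M := by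
  have h1 : ∑ ε : Fin n → Bool, ∑ j, (∑ i, (if ε i then (1 : ℝ) else -1) * Y i j) ^ 2 ≤ 2 ^ n * M := by
    refine (Finset.sum_le_sum fun ε _ => h ε).trans ?_
    simp
  have h2 : ∑ ε : Fin n → Bool, ∑ j, (∑ i, (if ε i then (1 : ℝ) else -1) * Y i j) ^ 2 =
      2 ^ n * ∑ i, ∑ j, Y i j ^ 2 := by
    rw [Finset.sum_comm, Finset.sum_comm (f := fun i j => Y i j ^ 2), Finset.mul_sum]
    refine Finset.sum_congr rfl fun j _ => ?_
    have e : ∀ ε : Fin n → Bool, (∑ i, (if ε i then (1 : ℝ) else -1) * Y i j) ^ 2 =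
        ∑ i, ∑ k, (Y i j * Y k j) *
          ((if ε i then (1 : ℝ) else -1) * (if ε k then (1 : ℝ) else -1)) := by
      intro ε
      rw [sq, Finset.sum_mul_sum]
      refine Finset.sum_congr rfl fun i _ => Finset.sum_congr rfl fun k _ => by ring
    simp_rw [e]
    rw [Finset.sum_comm, Finset.mul_sum]
    refine Finset.sum_congr rfl fun i _ => ?_
    rw [Finset.sum_comm]
    simp_rw [← Finset.mul_sum, bool_sign_sum]
    simp; ring
  rw [h2] at h1
  exact le_of_mul_le_mul_left h1 (by positivity)

lemma hull_smul_mem_cone {n : ℕ} (Y : Fin n → Fin n → ℝ) {f : Fin n → ℝ}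
    (hf : f ∈ convexHull ℝ (Set.range Y)) {t : ℝ} (h0 : 0 ≤ t) (h1 : t ≤ 1) :
    t • f ∈ coneSimplex Y := by
  classical
  have e : Set.range Y = Fintype.linearCombination ℝ Y '' (Set.range fun i => Pi.single i (1:ℝ)) := by
    rw [← Set.range_comp]; congr 1; ext i : 1; simp
  rw [e, ← LinearMap.image_convexHull, convexHull_rangle_single_eq_stdSimplex] at hf
  obtain ⟨w, ⟨hw0, hw1⟩, rfl⟩ := hf
  refine ⟨t • w, ⟨fun i => mul_nonneg h0 (hw0 i), ?_⟩, by simp⟩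
  simp only [Pi.smul_apply, smul_eq_mul, ← Finset.mul_sum, hw1, mul_one]
  exact h1

lemma cone_mem {n : ℕ} (hn : 1 ≤ n) (Y : Fin n → Fin n → ℝ) {x : Fin n → ℝ}
    (hx : x ∈ coneSimplex Y) :
    ∃ t : ℝ, 0 ≤ t ∧ t ≤ 1 ∧ ∃ f ∈ convexHull ℝ (Set.range Y), x = t • f := by
  obtain ⟨u, ⟨hu0, hu1⟩, rfl⟩ := hx
  refine ⟨∑ i, u i, Finset.sum_nonneg fun i _ => hu0 i, hu1, ?_⟩
  rcases (Finset.sum_nonneg fun i _ => hu0 i : 0 ≤ ∑ i, u i).eq_or_lt with h | h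
  · refine ⟨Y ⟨0, hn⟩, subset_convexHull _ _ ⟨_, rfl⟩, ?_⟩
    have : u = 0 := by
      ext i
      exact (Finset.sum_eq_zero_iff_of_nonneg fun i _ => hu0 i).1 h.symm i (Finset.mem_univ i)
    subst this; simp
  · refine ⟨Finset.univ.centerMass u Y,
      Finset.univ.centerMass_mem_convexHull (fun i _ => hu0 i) h fun i _ => ⟨i, rfl⟩, ?_⟩
    rw [Finset.centerMass, smul_smul, mul_inv_cancel₀ h.ne', one_smul, Fintype.linearCombination_apply]

lemma facet_functional {n : ℕ} {P F : Set (Fin n → ℝ)} (h0 : (0 : Fin n → ℝ) ∈ P)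
    (hsymm : P = -P) (hF : IsFacet P F) :
    ∃ l : (Fin n → ℝ) →L[ℝ] ℝ, (∀ x ∈ P, l x ≤ 1) ∧ F = {x ∈ P | l x = 1} := by
  obtain ⟨hexp, hne, ⟨p, hp⟩, -⟩ := hF
  obtain ⟨l, hl⟩ := hexp ⟨p, hp⟩
  have hp' := hp
  rw [hl] at hp'
  have hc0 : 0 ≤ l p := by simpa using hp'.2 0 h0
  have hc : 0 < l p := by
    refine lt_of_le_of_ne hc0 fun h => hne ?_
    have hz : ∀ x ∈ P, l x = 0 := by
      intro x hx
      have h1 := hp'.2 x hx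
      have hx' : -x ∈ P := by rw [hsymm]; simpa using hx
      have h2 := hp'.2 (-x) hx'
      rw [map_neg] at h2
      linarith
    rw [hl]
    ext x
    refine ⟨fun h => h.1, fun h => ⟨h, fun y hy => ?_⟩⟩
    rw [hz x h, hz y hy]
  refine ⟨(l p)⁻¹ • l, fun x hx => ?_, ?_⟩
  · simp only [smul_apply, smul_eq_mul]
    rw [inv_mul_le_iff₀ hc, mul_one]
    exact hp'.2 x hx
  · rw [hl]
    ext x
    simp only [smul_apply, smul_eq_mul, inv_mul_eq_iff_eq_mul₀ hc.ne', mul_one,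
      Set.mem_ofPred_eq]
    refine and_congr_right fun hx => ⟨fun h => le_antisymm (hp'.2 x hx) (h p hp'.1), fun h y hy => ?_⟩
    rw [h]; exact hp'.2 y hy

lemma cones_aedisjoint {n : ℕ} (hn : 1 ≤ n) {P : Set (Fin n → ℝ)}
    (Y Y' : Fin n → Fin n → ℝ)
    (l l' : (Fin n → ℝ) →L[ℝ] ℝ) (hl : ∀ x ∈ P, l x ≤ 1) (hl' : ∀ x ∈ P, l' x ≤ 1)
    (hY : convexHull ℝ (Set.range Y) = {x ∈ P | l x = 1})
    (hY' : convexHull ℝ (Set.range Y') = {x ∈ P | l' x = 1}) (hne : l ≠ l') :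
    AEDisjoint volume (coneSimplex Y) (coneSimplex Y') := by
  have hk : (LinearMap.ker (l - l').toLinearMap) ≠ ⊤ := by
    intro h
    rw [LinearMap.ker_eq_top] at h
    apply hne
    ext x : 1
    have := LinearMap.congr_fun h x
    simpa [sub_eq_zero] using this
  refine measure_mono_null ?_ (Measure.addHaar_submodule volume _ hk)
  rintro x ⟨hx, hx'⟩
  obtain ⟨t, ht0, ht1, f, hf, rfl⟩ := cone_mem hn Y hx
  obtain ⟨t', ht0', ht1', f', hf', e⟩ := cone_mem hn Y' hx'
  rw [hY] at hf
  rw [hY'] at hf'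
  have a1 : l (t • f) = t := by rw [map_smul, hf.2]; simp
  have a2 : l' (t • f) = t' := by rw [e, map_smul, hf'.2]; simp
  have a3 : l' (t • f) ≤ t := by
    rw [map_smul]; exact mul_le_of_le_one_right ht0 (hl' f hf.1)
  have a4 : l (t • f) ≤ t' := by
    rw [e, map_smul]; exact mul_le_of_le_one_right ht0' (hl f' hf'.1)
  simp only [SetLike.mem_coe, LinearMap.mem_ker]
  change l (t • f) - l' (t • f) = 0
  linarith

/-- the polar body, as a set of functionals -/
def polarSet {n N : ℕ} (v : Fin N → (Fin n → ℝ)) : Set ((Fin n → ℝ) →L[ℝ] ℝ) :=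
  {l | ∀ i, l (v i) ≤ 1}

lemma polarSet_le {n N : ℕ} (v : Fin N → (Fin n → ℝ)) {l : (Fin n → ℝ) →L[ℝ] ℝ}
    (hl : l ∈ polarSet v) : ∀ x ∈ convexHull ℝ (Set.range v), l x ≤ 1 := by
  have hc : Convex ℝ {x | l x ≤ 1} := convex_halfSpace_le l.toLinearMap.isLinear 1
  intro x hx
  refine convexHull_min (t := {x | l x ≤ 1}) ?_ hc hx
  rintro _ ⟨i, rfl⟩
  exact hl i

lemma isCompact_polarSet {n N : ℕ} (v : Fin N → (Fin n → ℝ))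
    (h0 : (0 : Fin n → ℝ) ∈ interior (convexHull ℝ (Set.range v))) :
    IsCompact (polarSet v) := by
  have hcl : IsClosed (polarSet v) := by
    have : polarSet v = ⋂ i, {l : (Fin n → ℝ) →L[ℝ] ℝ | l (v i) ≤ 1} := by
      ext; simp [polarSet]
    rw [this]
    exact isClosed_iInter fun i => isClosed_le (by fun_prop) continuous_const
  obtain ⟨r, hr, hball⟩ := Metric.nhds_basis_closedBall.mem_iff.1 (mem_interior_iff_mem_nhds.1 h0)
  refine (isCompact_closedBall (0 : (Fin n → ℝ) →L[ℝ] ℝ) r⁻¹).of_isClosed_subset hcl ?_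
  intro l hl
  rw [mem_closedBall_zero_iff]
  refine l.opNorm_le_bound (by positivity) fun x => ?_
  rcases eq_or_ne x 0 with rfl | hx
  · simp
  have key : ∀ y : Fin n → ℝ, y ≠ 0 → l y ≤ r⁻¹ * ‖y‖ := by
    intro y hy
    have hy' : 0 < ‖y‖ := norm_pos_iff.2 hy
    have h1 := polarSet_le v hl ((r / ‖y‖) • y) (hball (by
      rw [mem_closedBall_zero_iff, norm_smul, Real.norm_of_nonneg (by positivity),
        div_mul_cancel₀ _ hy'.ne']))
    rw [map_smul, smul_eq_mul, div_mul_eq_mul_div, div_le_one hy'] at h1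
    rw [inv_mul_eq_div, le_div_iff₀ hr, mul_comm]
    exact h1
  rw [Real.norm_eq_abs, abs_le]
  have h2 := key (-x) (neg_ne_zero.2 hx)
  rw [map_neg, norm_neg] at h2
  exact ⟨by linarith, key x hx⟩

lemma extreme_span {n N : ℕ} (v : Fin N → (Fin n → ℝ)) {l : (Fin n → ℝ) →L[ℝ] ℝ}
    (hl : l ∈ (polarSet v).extremePoints ℝ) :
    Submodule.span ℝ {x | ∃ i, v i = x ∧ l x = 1} = ⊤ := by
  by_contra hne
  obtain ⟨g, hg0, hg⟩ := Submodule.exists_le_ker_of_lt_top _ (lt_top_iff_ne_top.2 hne)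
  set G : (Fin n → ℝ) →L[ℝ] ℝ := LinearMap.toContinuousLinearMap g with hG
  have hGg : ∀ x, G x = g x := fun x => rfl
  have hact : ∀ i, l (v i) = 1 → G (v i) = 0 := fun i hi => by
    have : v i ∈ LinearMap.ker g := hg (Submodule.subset_span ⟨i, rfl, hi⟩)
    exact this
  have hev : ∀ᶠ e : ℝ in nhds 0, ∀ i, (l + e • G) (v i) ≤ 1 ∧ (l - e • G) (v i) ≤ 1 := by
    rw [Filter.eventually_all]
    intro i
    rcases (hl.1 i).eq_or_lt with h | h
    · refine Filter.Eventually.of_forall fun e => ?_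
      simp [hact i h, h]
    · have c1 : Continuous fun e : ℝ => (l + e • G) (v i) := by
        simp only [add_apply, smul_apply]; fun_prop
      have c2 : Continuous fun e : ℝ => (l - e • G) (v i) := by
        simp only [sub_apply, smul_apply]; fun_prop
      have d1 := c1.continuousAt (x := 0) |>.eventually_lt_const (u := 1) (by simpa using h)
      have d2 := c2.continuousAt (x := 0) |>.eventually_lt_const (u := 1) (by simpa using h)
      filter_upwards [d1, d2] with e h1 h2
      exact ⟨h1.le, h2.le⟩
  obtain ⟨r, hr, hball⟩ := Metric.eventually_nhds_iff.1 hev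
  have hr2 := hball (y := r / 2) (by rw [Real.dist_eq, sub_zero, abs_of_pos (by positivity)]; linarith)
  have hseg : l ∈ openSegment ℝ (l + (r / 2) • G) (l - (r / 2) • G) := by
    refine ⟨1/2, 1/2, by norm_num, by norm_num, by norm_num, ?_⟩
    ext x : 1
    simp
    ring
  have := hl.2 (fun i => (hr2 i).1) (fun i => (hr2 i).2) hseg
  have hz : (r / 2) • G = 0 := by simpa using this
  rcases smul_eq_zero.1 hz with h | h
  · linarith
  · apply hg0
    refine LinearMap.ext fun x => ?_
    rw [← hGg, h]; simp

lemma facet_of_extreme {n N : ℕ} (v : Fin N → (Fin n → ℝ))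
    (h0 : (0 : Fin n → ℝ) ∈ convexHull ℝ (Set.range v)) {l : (Fin n → ℝ) →L[ℝ] ℝ}
    (hl : l ∈ (polarSet v).extremePoints ℝ)
    (hne : {x ∈ convexHull ℝ (Set.range v) | l x = 1}.Nonempty) :
    IsFacet (convexHull ℝ (Set.range v)) {x ∈ convexHull ℝ (Set.range v) | l x = 1} := by
  set P := convexHull ℝ (Set.range v) with hP
  set F := {x ∈ P | l x = 1} with hF
  have hle : ∀ x ∈ P, l x ≤ 1 := polarSet_le v hl.1
  obtain ⟨p, hp⟩ := hne
  refine ⟨fun _ => ⟨l, ?_⟩, ?_, ⟨p, hp⟩, ?_⟩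
  · ext x
    refine and_congr_right fun hx => ⟨fun h y hy => ?_, fun h => ?_⟩
    · rw [h]; exact hle y hy
    · exact le_antisymm (hle x hx) (hp.2 ▸ h p hp.1)
  · intro h
    rw [← h] at h0
    have := h0.2
    simp at this
  · rw [direction_affineSpan]
    have hspan : Submodule.span ℝ F = ⊤ := by
      rw [eq_top_iff, ← extreme_span v hl]
      refine Submodule.span_mono ?_
      rintro _ ⟨i, rfl, hi⟩
      exact ⟨subset_convexHull _ _ ⟨i, rfl⟩, hi⟩
    have h1 : vectorSpan ℝ F ≤ LinearMap.ker l.toLinearMap := by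
      rw [vectorSpan_def, Submodule.span_le]
      rintro _ ⟨a, ha, b, hb, rfl⟩
      simp only [SetLike.mem_coe, LinearMap.mem_ker]
      change l (a - b) = 0
      rw [map_sub, ha.2, hb.2, sub_self]
    have h2 : (⊤ : Submodule ℝ (Fin n → ℝ)) ≤ vectorSpan ℝ F ⊔ Submodule.span ℝ {p} := by
      rw [← hspan, Submodule.span_le]
      intro x hx
      have : x = (x -ᵥ p) + p := by simp
      rw [this]
      exact Submodule.add_mem_sup (vsub_mem_vectorSpan ℝ hx hp) (Submodule.mem_span_singleton_self p)
    have hker : Module.finrank ℝ (LinearMap.ker l.toLinearMap) < n := by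
      have h3 : LinearMap.ker l.toLinearMap < ⊤ := by
        refine lt_top_iff_ne_top.2 fun h => ?_
        have : p ∈ LinearMap.ker l.toLinearMap := h ▸ Submodule.mem_top
        have h4 : l p = 0 := this
        rw [hp.2] at h4
        exact one_ne_zero h4
      simpa using Submodule.finrank_lt_finrank_of_lt h3
    have a1 := Submodule.finrank_mono h1
    have a2 := Submodule.finrank_mono h2
    have a3 := Submodule.finrank_add_le_finrank_add_finrank (vectorSpan ℝ F) (Submodule.span ℝ {p})
    have a4 : Module.finrank ℝ (Submodule.span ℝ {p}) ≤ 1 := by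
      simpa using finrank_span_le_card (R := ℝ) ({p} : Set (Fin n → ℝ))
    simp only [finrank_top, Module.finrank_fin_fun] at a2
    omega

lemma exists_facet_cover {n N : ℕ} (v : Fin N → (Fin n → ℝ))
    (h0 : (0 : Fin n → ℝ) ∈ interior (convexHull ℝ (Set.range v)))
    {x : Fin n → ℝ} (hx : x ∈ convexHull ℝ (Set.range v)) (hx0 : x ≠ 0) :
    ∃ F, IsFacet (convexHull ℝ (Set.range v)) F ∧ ∃ t : ℝ, 0 ≤ t ∧ t ≤ 1 ∧ ∃ f ∈ F, x = t • f := by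
  set P := convexHull ℝ (Set.range v) with hP
  have h0P : (0 : Fin n → ℝ) ∈ P := interior_subset h0
  have hclosed : IsClosed P := (Set.finite_range v).isClosed_convexHull ℝ
  have hconv : Convex ℝ P := convex_convexHull _ _
  have hcomp := isCompact_polarSet v h0
  let ev : ((Fin n → ℝ) →L[ℝ] ℝ) →L[ℝ] ℝ := ContinuousLinearMap.apply ℝ ℝ x
  have hev : ∀ l, ev l = l x := fun l => rfl
  have hz : (0 : (Fin n → ℝ) →L[ℝ] ℝ) ∈ polarSet v := fun i => by simp
  have hexp : IsExposed ℝ (polarSet v) {y ∈ polarSet v | ∀ z ∈ polarSet v, ev z ≤ ev y} :=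
    fun _ => ⟨ev, rfl⟩
  obtain ⟨z, hzA, hzm⟩ := hcomp.exists_isMaxOn ⟨0, hz⟩ ev.continuous.continuousOn
  obtain ⟨l, hlE⟩ := (hexp.isCompact hcomp).extremePoints_nonempty ⟨z, hzA, hzm⟩
  have hl := hexp.isExtreme.extremePoints_subset_extremePoints hlE
  have hmax : ∀ g ∈ polarSet v, g x ≤ l x := hlE.1.2
  -- bipolar theorem
  have bip : ∀ y ∉ P, ∃ g ∈ polarSet v, 1 < g y := by
    intro y hy
    obtain ⟨f, u, hfu, huy⟩ := geometric_hahn_banach_closed_point hconv hclosed hy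
    have hu : 0 < u := by simpa using hfu 0 h0P
    refine ⟨u⁻¹ • f, fun i => ?_, ?_⟩
    · have := hfu (v i) (subset_convexHull _ _ ⟨i, rfl⟩)
      simp only [smul_apply, smul_eq_mul]
      rw [inv_mul_le_iff₀ hu, mul_one]; exact this.le
    · simp only [smul_apply, smul_eq_mul]
      rw [lt_inv_mul_iff₀ hu, mul_one]; exact huy
  have hbdd : Bornology.IsBounded P := ((Set.finite_range v).isCompact_convexHull ℝ).isBounded
  have hpos : 0 < l x := by
    -- a large multiple of `x` is outside `P`
    obtain ⟨R, hR⟩ := hbdd.subset_closedBall 0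
    have hx' : 0 < ‖x‖ := norm_pos_iff.2 hx0
    obtain ⟨g, hg, hgx⟩ := bip (((|R| + 1) / ‖x‖) • x) (fun h => by
      have := hR h
      rw [mem_closedBall_zero_iff, norm_smul, Real.norm_of_nonneg (by positivity),
        div_mul_cancel₀ _ hx'.ne'] at this
      linarith [le_abs_self R])
    rw [map_smul, smul_eq_mul] at hgx
    have : 0 < g x := by
      by_contra hneg
      have : (|R| + 1) / ‖x‖ * g x ≤ 0 :=
        mul_nonpos_of_nonneg_of_nonpos (by positivity) (not_lt.1 hneg)
      linarith
    exact this.trans_le (hmax g hg)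
  have hmem : (l x)⁻¹ • x ∈ P := by
    by_contra hcon
    obtain ⟨g, hg, hgx⟩ := bip _ hcon
    rw [map_smul, smul_eq_mul, lt_inv_mul_iff₀ hpos, mul_one] at hgx
    exact absurd (hmax g hg) (not_le.2 hgx)
  have hfF : (l x)⁻¹ • x ∈ {x ∈ P | l x = 1} :=
    ⟨hmem, by rw [map_smul, smul_eq_mul, inv_mul_cancel₀ hpos.ne']⟩
  refine ⟨{x ∈ P | l x = 1}, facet_of_extreme v h0P hl ⟨_, hfF⟩, l x, hpos.le,
    polarSet_le v hl.1 x hx, _, hfF, ?_⟩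
  rw [smul_smul, mul_inv_cancel₀ hpos.ne', one_smul]

lemma zero_mem_interior {n : ℕ} {P : Set (Fin n → ℝ)} (hc : Convex ℝ P)
    (hint : (interior P).Nonempty) (hsymm : P = -P) : (0 : Fin n → ℝ) ∈ interior P := by
  obtain ⟨p, hp⟩ := hint
  have hp' : -p ∈ interior P := by
    have : interior P = -interior P := by
      conv_lhs => rw [hsymm]
      exact ((Homeomorph.neg (Fin n → ℝ)).preimage_interior P).symm
    rw [this]; simpa using hp
  have := hc.interior hp hp' (a := 1/2) (b := 1/2) (by norm_num) (by norm_num) (by norm_num)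
  simpa using this

/-- For a symmetric polytope `P ⊂ ℝⁿ` whose facets are simplices
`conv{y₁,…,yₙ}` (enumerated by `Y`),
`(1/|P|)·∫_P ‖x‖₂² dx ≤ (2/((n+1)(n+2)))·max_{facets, signs} ‖ε₁y₁+⋯+εₙyₙ‖₂²`. -/
theorem mean_sq_l2_norm_symmetric_polytope (n : ℕ) (hn : 1 ≤ n)
    (P : Set (Fin n → ℝ)) (N : ℕ) (v : Fin N → (Fin n → ℝ))
    (hP : P = convexHull ℝ (Set.range v)) (hint : (interior P).Nonempty)
    (hsymm : P = -P)
    (m : ℕ) (hm : 0 < m) (Y : Fin m → Fin n → (Fin n → ℝ))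
    (hY : ∀ k, IsFacet P (convexHull ℝ (Set.range (Y k))))
    (hfacets : ∀ F, IsFacet P F → ∃ k, F = convexHull ℝ (Set.range (Y k))) :
    (volume P).toReal⁻¹ * ∫ x in P, ∑ j, (x j) ^ 2 ≤
      ((2 : ℝ) / ((n + 1) * (n + 2))) *
        Finset.univ.sup'
          ⟨(⟨0, hm⟩, fun _ => true), Finset.mem_univ _⟩
          (fun kε : Fin m × (Fin n → Bool) =>
            ∑ j, (∑ i, (if kε.2 i then (1 : ℝ) else -1) * Y kε.1 i j) ^ 2) := by
    classical
  set M := Finset.univ.sup'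
          ⟨(⟨0, hm⟩, fun _ => true), Finset.mem_univ _⟩
          (fun kε : Fin m × (Fin n → Bool) =>
            ∑ j, (∑ i, (if kε.2 i then (1 : ℝ) else -1) * Y kε.1 i j) ^ 2) with hM
  have hle : ∀ (k : Fin m) (ε : Fin n → Bool), ∑ j, (∑ i, (if ε i then (1 : ℝ) else -1) * Y k i j) ^ 2 ≤ M := fun k ε =>
    Finset.le_sup' (fun kε : Fin m × (Fin n → Bool) =>
            ∑ j, (∑ i, (if kε.2 i then (1 : ℝ) else -1) * Y kε.1 i j) ^ 2) (Finset.mem_univ (k, ε))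
  clear_value M
  have hconv : Convex ℝ P := hP ▸ convex_convexHull _ _
  have hcomp : IsCompact P := hP ▸ (Set.finite_range v).isCompact_convexHull ℝ
  have h0 : (0 : Fin n → ℝ) ∈ interior P := zero_mem_interior hconv hint hsymm
  have h0P : (0 : Fin n → ℝ) ∈ P := interior_subset h0
  choose l hl hlY using fun k => facet_functional h0P hsymm (hY k)
  -- the cones cover `P`
  have hcover : P = ⋃ T : Set.range (fun k => coneSimplex (Y k)), (T : Set (Fin n → ℝ)) := by
    ext x
    simp only [Set.mem_iUnion, Subtype.exists, Set.mem_range, exists_prop, exists_exists_eq_and]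
    constructor
    · intro hx
      rcases eq_or_ne x 0 with rfl | hx0
      · obtain ⟨p, hp⟩ := (hY ⟨0, hm⟩).2.2.1
        refine ⟨⟨0, hm⟩, ?_⟩
        simpa using hull_smul_mem_cone (Y ⟨0, hm⟩) hp le_rfl zero_le_one
      · subst hP
        obtain ⟨F, hF, t, ht0, ht1, f, hf, rfl⟩ := exists_facet_cover v h0 hx hx0
        obtain ⟨k, rfl⟩ := hfacets F hF
        exact ⟨k, hull_smul_mem_cone (Y k) hf ht0 ht1⟩
    · rintro ⟨k, hk⟩
      obtain ⟨t, ht0, ht1, f, hf, rfl⟩ := cone_mem hn (Y k) hk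
      rw [hlY k] at hf
      exact hconv.smul_mem_of_zero_mem h0P hf.1 ⟨ht0, ht1⟩
  have hdisj : Pairwise (Function.onFun (AEDisjoint volume)
      (fun T : Set.range (fun k => coneSimplex (Y k)) => (T : Set (Fin n → ℝ)))) := by
    rintro ⟨_, k, rfl⟩ ⟨_, k', rfl⟩ hne
    have hll : l k ≠ l k' := by
      intro h
      apply hne
      have hh : convexHull ℝ (Set.range (Y k)) = convexHull ℝ (Set.range (Y k')) := by
        rw [hlY k, hlY k', h]
      have hsub : ∀ a b, convexHull ℝ (Set.range (Y a)) = convexHull ℝ (Set.range (Y b)) →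
          coneSimplex (Y a) ⊆ coneSimplex (Y b) := by
        intro a b hab x hx
        obtain ⟨t, ht0, ht1, f, hf, rfl⟩ := cone_mem hn (Y a) hx
        exact hull_smul_mem_cone (Y b) (hab ▸ hf) ht0 ht1
      exact Subtype.ext (Set.Subset.antisymm (hsub _ _ hh) (hsub _ _ hh.symm))
    exact cones_aedisjoint hn (Y k) (Y k') (l k) (l k') (hl k) (hl k') (hlY k) (hlY k') hll
  have hintg : ∀ f : (Fin n → ℝ) → ℝ, Continuous f → IntegrableOn f P := fun f hf =>
    hf.continuousOn.integrableOn_compact hcomp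
  set c : ℝ := 2 / (((n : ℝ) + 1) * (n + 2)) * M with hc
  have hmain : ∫ x in P, (∑ j, x j ^ 2 - c) ≤ 0 := by
    have hi := hintg (fun x => ∑ j, x j ^ 2 - c) (by fun_prop)
    have hfin : Finite (Set.range (fun k => coneSimplex (Y k))) := inferInstance
    rw [hcover] at hi ⊢
    rw [integral_iUnion_ae _ hdisj hi]
    · refine tsum_nonpos ?_
      rintro ⟨_, k, rfl⟩
      refine cone_integral_le (Y k) M ?_ (sign_avg (Y k) M (hle k))
      simpa using hle k (fun _ => true)
    · rintro ⟨_, k, rfl⟩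
      exact (isCompact_coneSimplex (Y k)).isClosed.measurableSet.nullMeasurableSet
  have hvol : 0 < (volume P).toReal :=
    ENNReal.toReal_pos (Measure.measure_pos_of_nonempty_interior volume hint).ne' hcomp.measure_lt_top.ne
  rw [integral_sub (hintg _ (by fun_prop)) (hintg _ (by fun_prop)), setIntegral_const, smul_eq_mul,
    sub_nonpos] at hmain
  rw [inv_mul_le_iff₀ hvol]
  exact hmain
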